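/- Let q ≥ 3 and let a₁ ≤ a₂ ≤ ⋯ ≤ a_q be positive integers, with V = ℂ^{a₁+1} ⊗ ⋯ ⊗ ℂ^{a_q+1}. (i) If a_q ≥ Π_{i=1}^{q−1}(a_i+1) − Σ_{i=1}^{q−1}a_i + 1, then the general tensor in V has rank exactly min{a_q+1, Π_{i=1}^{q−1}(a_i+1)}: there is a polynomial function F on V, not identically zero, such that every T ∈ V with F(T) ≠ 0 has rank min{a_q+1, Π_{i=1}^{q−1}(a_i+1)}. (ii) If a_q = Π_{i=1}^{q−1}(a_i+1) − Σ_{i=1}^{q−1}a_i, then the general tensor in V has rank exactly a_q+1. (iii) Under the hypothesis of (i), the Segre product ℙ^{a₁}×⋯×ℙ^{a_q} is not k-identifiable for any k with Π_{i=1}^{q−1}(a_i+1) − Σ_{i=1}^{q−1}a_i < k ≤ min{a_q+1, Π_{i=1}^{q−1}(a_i+1)}. -/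

import Mathlib

open scoped TensorProduct
open PiTensorProduct

noncomputable section

/-- The space of tensors `V = ℂ^{a₁+1} ⊗ ⋯ ⊗ ℂ^{a_q+1}`. -/
abbrev Ten (q : ℕ) (a : Fin q → ℕ) : Type :=
  ⨂[ℂ] i : Fin q, (Fin (a i + 1) → ℂ)

/-- Index type for the coordinates on the parameter space `W_k`. -/
abbrev WIdx (q : ℕ) (a : Fin q → ℕ) (k : ℕ) : Type :=
  Fin k × Σ j : Fin q, Fin (a j + 1)

/-- Index type for the standard (decomposable) basis of `Ten q a`. -/
abbrev BIdx (q : ℕ) (a : Fin q → ℕ) : Type := ∀ j : Fin q, Fin (a j + 1)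

/-- A tensor is decomposable if it is `v₁ ⊗ ⋯ ⊗ v_q` with all `vᵢ ≠ 0`. -/
def IsDecomposable {q : ℕ} {a : Fin q → ℕ} (t : Ten q a) : Prop :=
  ∃ v : ∀ j : Fin q, Fin (a j + 1) → ℂ, (∀ j, v j ≠ 0) ∧ t = tprod ℂ v

/-- The affine tangent space at `v₁ ⊗ ⋯ ⊗ v_q` to the cone over the Segre variety:
the span of all tensors obtained by replacing one factor of `v` by an arbitrary vector. -/
def tangent {q : ℕ} (a : Fin q → ℕ) (v : ∀ j : Fin q, Fin (a j + 1) → ℂ) :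
    Submodule ℂ (Ten q a) :=
  Submodule.span ℂ
    {x | ∃ (j : Fin q) (u : Fin (a j + 1) → ℂ), x = tprod ℂ (Function.update v j u)}

/-- The map `Φ : W_k → V` sending a `k`-tuple of factor vectors to the sum of the
corresponding decomposable tensors. -/
def Phi {q : ℕ} (a : Fin q → ℕ) {k : ℕ}
    (p : Fin k → ∀ j : Fin q, Fin (a j + 1) → ℂ) : Ten q a :=
  ∑ i, tprod ℂ (p i)

/-- Evaluation of a polynomial function on `W_k` at a parameter point. -/
def evalW {q : ℕ} {a : Fin q → ℕ} {k : ℕ}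
    (F : MvPolynomial (WIdx q a k) ℂ)
    (p : Fin k → ∀ j : Fin q, Fin (a j + 1) → ℂ) : ℂ :=
  MvPolynomial.eval (fun x => p x.1 x.2.1 x.2.2) F

/-- `k`-identifiability of the Segre product `ℙ^{a₁} × ⋯ × ℙ^{a_q}`:
there is a nonzero polynomial function `F` on `W_k` such that whenever `F(p) ≠ 0`,
the tensor `Φ(p)` has a rank-`k` decomposition, and any two rank-`k` decompositions
of `Φ(p)` agree as multisets of decomposable tensors. -/
def Identifiable (q : ℕ) (a : Fin q → ℕ) (k : ℕ) : Prop :=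
  ∃ F : MvPolynomial (WIdx q a k) ℂ,
    (∃ p, evalW F p ≠ 0) ∧
    ∀ p, evalW F p ≠ 0 →
      ((∃ t : Fin k → Ten q a, (∀ i, IsDecomposable (t i)) ∧ ∑ i, t i = Phi a p) ∧
       ∀ s t : Fin k → Ten q a,
         (∀ i, IsDecomposable (s i)) → (∀ i, IsDecomposable (t i)) →
         ∑ i, s i = Phi a p → ∑ i, t i = Phi a p →
         Finset.univ.val.map s = Finset.univ.val.map t)

/-- The standard decomposable basis vector of `Ten q a` indexed by `f`. -/
def basisVec {q : ℕ} (a : Fin q → ℕ) (f : BIdx q a) : Ten q a :=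
  tprod ℂ fun j => Pi.single (f j) 1

/-- The vector of `Ten q a` with coordinates `c` in the standard basis. -/
def fromCoords {q : ℕ} (a : Fin q → ℕ) (c : BIdx q a → ℂ) : Ten q a :=
  ∑ f : BIdx q a, c f • basisVec a f

/-- Evaluation of a polynomial function on `W_k × V^e` at a parameter point. -/
def evalWV {q : ℕ} {a : Fin q → ℕ} {k e : ℕ}
    (F : MvPolynomial (WIdx q a k ⊕ (Fin e × BIdx q a)) ℂ)
    (p : Fin k → ∀ j : Fin q, Fin (a j + 1) → ℂ)
    (c : Fin e → BIdx q a → ℂ) : ℂ :=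
  MvPolynomial.eval (Sum.elim (fun x => p x.1 x.2.1 x.2.2) (fun y => c y.1 y.2)) F

/-- `TangentGeneral q a k d` says: the general linear subspace of `V` of dimension `d`
which is tangent to the Segre at `k` general points is tangent only at those points.
Concretely, with `e = d - k(1 + Σᵢ aᵢ)`, there is a nonzero polynomial function `F` on
`W_k × V^e` such that whenever `F ≠ 0` at `(p, c)`, the space `L` spanned by the tangent
spaces at the `k` decomposable tensors determined by `p` together with the `e` extra
vectors determined by `c` has dimension exactly `d`, and any decomposable tensor whose
tangent space lies in `L` is a scalar multiple of one of the `k` given ones. -/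
def TangentGeneral (q : ℕ) (a : Fin q → ℕ) (k d : ℕ) : Prop :=
  ∃ F : MvPolynomial (WIdx q a k ⊕ (Fin (d - k * (1 + ∑ j, a j)) × BIdx q a)) ℂ,
    (∃ p c, evalWV F p c ≠ 0) ∧
    ∀ p c, evalWV F p c ≠ 0 →
      (Module.finrank ℂ
          ↥((⨆ i, tangent a (p i)) ⊔
            Submodule.span ℂ (Set.range fun m => fromCoords a (c m))) = d ∧
       ∀ w : ∀ j : Fin q, Fin (a j + 1) → ℂ, (∀ j, w j ≠ 0) →
         tangent a w ≤
           (⨆ i, tangent a (p i)) ⊔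
             Submodule.span ℂ (Set.range fun m => fromCoords a (c m)) →
         ∃ (i : Fin k) (t : ℂ), tprod ℂ w = t • tprod ℂ (p i))

/-- The rank of a tensor: the least `k` such that it is a sum of `k`
decomposable tensors. -/
def tensorRank {q : ℕ} {a : Fin q → ℕ} (T : Ten q a) : ℕ :=
  sInf {k | ∃ t : Fin k → Ten q a, (∀ i, IsDecomposable (t i)) ∧ ∑ i, t i = T}

/-!
Flattening along the last factor turns a tensor into a matrix with `a_q + 1` rows and
`N = ∏_{i<q} (a_i + 1)` columns, and a decomposable tensor into a rank-one matrix `w ⊗ s` with `s`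
on the Segre cone of the first `q - 1` factors. The rank of the flattening bounds the tensor rank
from below, and the columns of the flattening show that `N` summands always suffice.

Suppose `N - ∑_{i<q} a_i ≤ k ≤ N`. Then, for `k` general points `s_1, …, s_k` of the Segre cone, the
span of these points together with the tangent space at any one of them is everything: for suitable
points among the standard basis vectors, the missing basis vectors are all tangent at one point. If
`k = a_q + 1`, this makes the differential of `(w, s) ↦ ∑ w_i ⊗ s_i` surjective at a point where the
`w_i` form the standard basis, so the map is dominant, and by Chevalley's theorem the general
matrix is in its image.

If `N - ∑_{i<q} a_i < k`, counting dimensions yields a tangent direction at `s_i` inside the span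
of the `s_l` that is not a mere rescaling. By the implicit function theorem `s_i` then moves along
the Segre cone within that span, and the linear relation can be absorbed into the `w_l`, giving a
second decomposition.
-/

section PolynomialFunctions

variable {𝕜 E F : Type*} [Field 𝕜] [AddCommGroup E] [Module 𝕜 E] [AddCommGroup F] [Module 𝕜 F]

variable (𝕜 E) in
/-- The algebra of polynomial functions on a vector space, defined without reference to coordinates
as the algebra generated by the linear forms. -/
def polyFun : Subalgebra 𝕜 (E → 𝕜) :=
  Algebra.adjoin 𝕜 (Set.range fun φ : Module.Dual 𝕜 E => ⇑φ)

theorem dual_mem_polyFun (φ : Module.Dual 𝕜 E) : ⇑φ ∈ polyFun 𝕜 E :=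
  Algebra.subset_adjoin ⟨φ, rfl⟩

theorem fun_sum_mem_polyFun {ι : Type*} (s : Finset ι) {g : ι → E → 𝕜}
    (hg : ∀ i ∈ s, g i ∈ polyFun 𝕜 E) : (fun x => ∑ i ∈ s, g i x) ∈ polyFun 𝕜 E := by
  simpa only [Finset.sum_fn] using sum_mem hg

theorem fun_prod_mem_polyFun {ι : Type*} (s : Finset ι) {g : ι → E → 𝕜}
    (hg : ∀ i ∈ s, g i ∈ polyFun 𝕜 E) : (fun x => ∏ i ∈ s, g i x) ∈ polyFun 𝕜 E := by
  simpa only [Finset.prod_fn] using prod_mem hg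

theorem det_mem_polyFun {r : Type*} [Fintype r] [DecidableEq r] {M : E → Matrix r r 𝕜}
    (hM : ∀ i j, (fun x => M x i j) ∈ polyFun 𝕜 E) : (fun x => (M x).det) ∈ polyFun 𝕜 E := by
  simp only [Matrix.det_apply']
  exact fun_sum_mem_polyFun _ fun s _ => mul_mem (Subalgebra.algebraMap_mem _ _)
    (fun_prod_mem_polyFun _ fun i _ => hM _ _)

theorem polyFun_eq_adjoin_range_coord {σ : Type*} [Finite σ] (b : Module.Basis σ 𝕜 E) :
    polyFun 𝕜 E = Algebra.adjoin 𝕜 (Set.range fun i => ⇑(b.coord i)) := by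
  have := Fintype.ofFinite σ
  refine le_antisymm (Algebra.adjoin_le ?_) (Algebra.adjoin_mono ?_)
  · rintro _ ⟨φ, rfl⟩
    have hφ : ⇑φ = ∑ i, φ (b i) • ⇑(b.coord i) := by
      ext x
      conv_lhs => rw [← b.sum_repr x, map_sum]
      simp [mul_comm]
    dsimp only
    rw [hφ]
    exact sum_mem fun i _ =>
      Subalgebra.smul_mem _ (Algebra.subset_adjoin (Set.mem_range_self i)) _
  · rintro _ ⟨i, rfl⟩
    exact ⟨b.coord i, rfl⟩

theorem mem_polyFun_iff_exists_mvPolynomial {σ : Type*} [Finite σ] (e : E ≃ₗ[𝕜] (σ → 𝕜))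
    {g : E → 𝕜} :
    g ∈ polyFun 𝕜 E ↔ ∃ P : MvPolynomial σ 𝕜, ∀ x, MvPolynomial.eval (e x) P = g x := by
  let b := Module.Basis.ofEquivFun e
  rw [polyFun_eq_adjoin_range_coord b, Algebra.adjoin_range_eq_range_aeval, AlgHom.mem_range]
  refine exists_congr fun P => funext_iff.trans (forall_congr' fun x => ?_)
  have hx := MvPolynomial.comp_aeval_apply (fun i => ⇑(b.coord i))
    (Pi.evalAlgHom 𝕜 (fun _ => 𝕜) x) P
  simp only [Pi.evalAlgHom_apply] at hx
  rw [hx, MvPolynomial.aeval_eq_eval]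
  rfl

theorem exists_polynomial_eval_eq_line {g : E → 𝕜} (hg : g ∈ polyFun 𝕜 E) (x v : E) :
    ∃ P : Polynomial 𝕜, ∀ t, P.eval t = g (x + t • v) := by
  induction hg using Algebra.adjoin_induction with
  | mem _ h =>
    obtain ⟨φ, rfl⟩ := h
    exact ⟨.C (φ x) + .C (φ v) * .X, fun t => by simp [mul_comm t]⟩
  | algebraMap c => exact ⟨.C c, fun t => by simp⟩
  | add _ _ _ _ h₁ h₂ =>
    obtain ⟨⟨P, hP⟩, Q, hQ⟩ := And.intro h₁ h₂
    exact ⟨P + Q, fun t => by simp [hP, hQ]⟩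
  | mul _ _ _ _ h₁ h₂ =>
    obtain ⟨⟨P, hP⟩, Q, hQ⟩ := And.intro h₁ h₂
    exact ⟨P * Q, fun t => by simp [hP, hQ]⟩

theorem polyFun_mul_ne_zero [Infinite 𝕜] {g h : E → 𝕜} (hg : g ∈ polyFun 𝕜 E)
    (hh : h ∈ polyFun 𝕜 E) (hg0 : g ≠ 0) (hh0 : h ≠ 0) : g * h ≠ 0 := by
  obtain ⟨x, hx⟩ := Function.ne_iff.1 hg0
  obtain ⟨y, hy⟩ := Function.ne_iff.1 hh0
  obtain ⟨P, hP⟩ := exists_polynomial_eval_eq_line hg x (y - x)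
  obtain ⟨Q, hQ⟩ := exists_polynomial_eval_eq_line hh x (y - x)
  have hP0 : P ≠ 0 := by
    rintro rfl
    exact hx (by simpa using (hP 0).symm)
  have hQ0 : Q ≠ 0 := by
    rintro rfl
    exact hy (by simpa using (hQ 1).symm)
  intro hgh
  refine mul_ne_zero hP0 hQ0 (Polynomial.funext fun t => ?_)
  simpa [hP, hQ] using congrFun hgh (x + t • (y - x))

variable (𝕜) in
/-- Polynomial maps between vector spaces: every linear form on the target pulls back to a
polynomial function. -/
def IsPolyMap (g : E → F) : Prop :=
  ∀ φ : Module.Dual 𝕜 F, (fun x => φ (g x)) ∈ polyFun 𝕜 E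

namespace IsPolyMap

theorem of_mem_polyFun {g : E → 𝕜} (hg : g ∈ polyFun 𝕜 E) : IsPolyMap 𝕜 g := fun φ => by
  have hφ : (fun x => φ (g x)) = φ 1 • g := by
    ext x
    rw [← mul_one (g x), ← smul_eq_mul, map_smul]
    simp [mul_comm]
  exact hφ ▸ Subalgebra.smul_mem _ hg _

theorem mem_polyFun {g : E → 𝕜} (hg : IsPolyMap 𝕜 g) : g ∈ polyFun 𝕜 E :=
  hg LinearMap.id

theorem linearMap_comp {F' : Type*} [AddCommGroup F'] [Module 𝕜 F'] {g : E → F}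
    (hg : IsPolyMap 𝕜 g) (L : F →ₗ[𝕜] F') : IsPolyMap 𝕜 fun x => L (g x) :=
  fun φ => hg (φ ∘ₗ L)

theorem of_linearMap (L : E →ₗ[𝕜] F) : IsPolyMap 𝕜 L :=
  fun φ => dual_mem_polyFun (φ ∘ₗ L)

protected theorem id : IsPolyMap 𝕜 fun x : E => x :=
  of_linearMap LinearMap.id

theorem const (y : F) : IsPolyMap 𝕜 fun _ : E => y :=
  fun φ => Subalgebra.algebraMap_mem _ (φ y)

theorem add {g h : E → F} (hg : IsPolyMap 𝕜 g) (hh : IsPolyMap 𝕜 h) :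
    IsPolyMap 𝕜 fun x => g x + h x := fun φ => by
  simp only [map_add]
  exact add_mem (hg φ) (hh φ)

theorem sum {ι : Type*} (s : Finset ι) {g : ι → E → F} (hg : ∀ i ∈ s, IsPolyMap 𝕜 (g i)) :
    IsPolyMap 𝕜 fun x => ∑ i ∈ s, g i x := fun φ => by
  simp only [map_sum]
  exact fun_sum_mem_polyFun s fun i hi => hg i hi φ

theorem smul {c : E → 𝕜} {g : E → F} (hc : c ∈ polyFun 𝕜 E) (hg : IsPolyMap 𝕜 g) :
    IsPolyMap 𝕜 fun x => c x • g x := fun φ => by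
  simp only [map_smul, smul_eq_mul]
  exact mul_mem hc (hg φ)

theorem pi {ι : Type*} [Finite ι] {V : ι → Type*} [∀ i, AddCommGroup (V i)]
    [∀ i, Module 𝕜 (V i)] {g : E → ∀ i, V i} (hg : ∀ i, IsPolyMap 𝕜 fun x => g x i) :
    IsPolyMap 𝕜 g := by
  classical
  have := Fintype.ofFinite ι
  have hsum : IsPolyMap 𝕜 fun x => ∑ i, LinearMap.single 𝕜 V i (g x i) :=
    sum _ fun i _ => (hg i).linearMap_comp _
  simpa only [LinearMap.single_apply, Finset.univ_sum_single] using hsum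

theorem apply {ι : Type*} {V : ι → Type*} [∀ i, AddCommGroup (V i)]
    [∀ i, Module 𝕜 (V i)] {g : E → ∀ i, V i} (hg : IsPolyMap 𝕜 g) (i : ι) :
    IsPolyMap 𝕜 fun x => g x i :=
  hg.linearMap_comp (LinearMap.proj i)

theorem comp_mem_polyFun {g : E → F} (hg : IsPolyMap 𝕜 g) {f : F → 𝕜} (hf : f ∈ polyFun 𝕜 F) :
    f ∘ g ∈ polyFun 𝕜 E := by
  induction hf using Algebra.adjoin_induction with
  | mem _ h =>
    obtain ⟨φ, rfl⟩ := h
    exact hg φ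
  | algebraMap c => exact Subalgebra.algebraMap_mem _ c
  | add _ _ _ _ h₁ h₂ => exact add_mem h₁ h₂
  | mul _ _ _ _ h₁ h₂ => exact mul_mem h₁ h₂

end IsPolyMap

end PolynomialFunctions

section Generic

open Filter

variable {𝕜 E F : Type*} [Field 𝕜] [Infinite 𝕜]
  [AddCommGroup E] [Module 𝕜 E] [AddCommGroup F] [Module 𝕜 F]

variable (𝕜 E) in
/-- The filter of sets containing a nonempty Zariski open set, so that `∀ᶠ x in generic 𝕜 E, p x`
expresses that `p` holds at the general point of `E`. -/
def generic : Filter E where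
  sets := {s | ∃ g ∈ polyFun 𝕜 E, g ≠ 0 ∧ ∀ x, g x ≠ 0 → x ∈ s}
  univ_sets := ⟨1, one_mem _, one_ne_zero, fun _ _ => trivial⟩
  sets_of_superset := fun ⟨g, hg, hg0, hs⟩ hst => ⟨g, hg, hg0, fun x hx => hst (hs x hx)⟩
  inter_sets := fun ⟨g, hg, hg0, hs⟩ ⟨h, hh, hh0, ht⟩ =>
    ⟨g * h, mul_mem hg hh, polyFun_mul_ne_zero hg hh hg0 hh0, fun x hx =>
      ⟨hs x (left_ne_zero_of_mul hx), ht x (right_ne_zero_of_mul hx)⟩⟩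

instance generic_neBot : (generic 𝕜 E).NeBot where
  ne' h := by
    obtain ⟨g, -, hg0, hg⟩ := empty_mem_iff_bot.2 h
    obtain ⟨x, hx⟩ := Function.ne_iff.1 hg0
    exact hg x hx

theorem eventually_generic_ne_zero {g : E → 𝕜} (hg : g ∈ polyFun 𝕜 E) {x₀ : E} (h : g x₀ ≠ 0) :
    ∀ᶠ x in generic 𝕜 E, g x ≠ 0 :=
  ⟨g, hg, fun hg0 => h (congrFun hg0 x₀), fun _ hx => hx⟩

theorem tendsto_generic {L : E →ₗ[𝕜] F} (hL : Function.Surjective L) :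
    Tendsto L (generic 𝕜 E) (generic 𝕜 F) := fun _ ⟨g, hg, hg0, hs⟩ =>
  ⟨g ∘ L, (IsPolyMap.of_linearMap L).comp_mem_polyFun hg,
    fun h => hg0 (hL.injective_comp_right h), fun x hx => hs (L x) hx⟩

theorem eventually_generic_iff_exists_mvPolynomial {σ : Type*} [Finite σ]
    (e : E ≃ₗ[𝕜] (σ → 𝕜)) {p : E → Prop} :
    (∀ᶠ x in generic 𝕜 E, p x) ↔
      ∃ G : MvPolynomial σ 𝕜, G ≠ 0 ∧ ∀ x, MvPolynomial.eval (e x) G ≠ 0 → p x := by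
  constructor
  · rintro ⟨g, hg, hg0, hgp⟩
    obtain ⟨G, hG⟩ := (mem_polyFun_iff_exists_mvPolynomial e).1 hg
    refine ⟨G, ?_, fun x hx => hgp x (hG x ▸ hx)⟩
    rintro rfl
    exact hg0 (funext fun x => by simp [← hG])
  · rintro ⟨G, hG, hGp⟩
    refine ⟨_, (mem_polyFun_iff_exists_mvPolynomial e).2 ⟨G, fun _ => rfl⟩, fun h0 =>
      hG (MvPolynomial.funext fun c => ?_), hGp⟩
    simpa using congrFun h0 (e.symm c)

theorem eventually_generic_linearIndependent {r : Type*} [Finite r] {u : E → r → F}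
    (hu : ∀ i, IsPolyMap 𝕜 fun x => u x i) {x₀ : E} (h : LinearIndependent 𝕜 (u x₀)) :
    ∀ᶠ x in generic 𝕜 E, LinearIndependent 𝕜 (u x) := by
  classical
  have := Fintype.ofFinite r
  obtain ⟨π, hπ⟩ := (Fintype.linearCombination 𝕜 (u x₀)).exists_leftInverse_of_injective
    (LinearMap.ker_eq_bot.2 h.fintypeLinearCombination_injective)
  let gram (x : E) : Matrix r r 𝕜 := .of fun i => π (u x i)
  have hone : gram x₀ = 1 := by
    ext i j
    have := congrFun (LinearMap.congr_fun hπ (Pi.single i 1)) j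
    simpa [gram, Fintype.linearCombination_apply_single, Matrix.one_apply, Pi.single_apply,
      eq_comm] using this
  have hdet : (fun x => (gram x).det) ∈ polyFun 𝕜 E :=
    det_mem_polyFun fun i j => hu i (LinearMap.proj j ∘ₗ π)
  refine (eventually_generic_ne_zero hdet (x₀ := x₀) (by simp [hone])).mono fun x hx => ?_
  exact .of_comp π (Matrix.linearIndependent_rows_of_det_ne_zero hx)

theorem eventually_generic_surjective {V : Type*} [AddCommGroup V] [Module 𝕜 V]
    [FiniteDimensional 𝕜 F] {T : E → V →ₗ[𝕜] F} (hT : ∀ v, IsPolyMap 𝕜 fun x => T x v) {x₀ : E}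
    (h : Function.Surjective (T x₀)) : ∀ᶠ x in generic 𝕜 E, Function.Surjective (T x) := by
  let b := Module.finBasis 𝕜 F
  choose v hv using fun i => h (b i)
  have hli : LinearIndependent 𝕜 fun i => T x₀ (v i) := by
    simpa only [hv] using b.linearIndependent
  refine (eventually_generic_linearIndependent (fun i => hT (v i)) hli).mono fun x hx => ?_
  rw [← LinearMap.range_eq_top, eq_top_iff,
    ← hx.span_eq_top_of_card_eq_finrank' (Fintype.card_fin _), Submodule.span_le]
  rintro _ ⟨i, rfl⟩
  exact ⟨v i, rfl⟩

end Generic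

section Dominance

theorem exists_basicOpen_subset_of_bot_mem {R : Type*} [CommRing R] [IsDomain R]
    {S : Set (PrimeSpectrum R)} (hS : Topology.IsConstructible S) (hbot : ⊥ ∈ S) :
    ∃ f : R, f ≠ 0 ∧ (PrimeSpectrum.basicOpen f : Set (PrimeSpectrum R)) ⊆ S := by
  obtain ⟨D, rfl⟩ := PrimeSpectrum.exists_constructibleSetData_iff.2 hS
  simp only [PrimeSpectrum.ConstructibleSetData.toSet, Set.mem_iUnion] at hbot
  obtain ⟨C, hC, hg, hf⟩ := hbot
  refine ⟨C.f, fun h0 => hf (by simp [h0]), fun x hx =>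
    Set.mem_iUnion₂.2 ⟨C, hC, ?_, by simpa using hx⟩⟩
  rintro _ ⟨i, rfl⟩
  have hi : C.g i = 0 := hg ⟨i, rfl⟩
  rw [hi]
  exact zero_mem _

variable {K σ τ : Type*} [Field K] [Finite σ]

theorem finitePresentation_algHom_mvPolynomial [Finite τ]
    (φ : MvPolynomial τ K →ₐ[K] MvPolynomial σ K) : φ.toRingHom.FinitePresentation := by
  refine RingHom.FinitePresentation.of_finiteType.1
    (RingHom.FiniteType.of_comp_finiteType (f := algebraMap K (MvPolynomial τ K)) ?_)
  change (φ.toRingHom.comp _).FiniteType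
  rw [AlgHom.toRingHom_eq_coe, AlgHom.comp_algebraMap]
  exact RingHom.finiteType_algebraMap.2 inferInstance

theorem exists_eval_eq_of_pointToPoint_mem_range [IsAlgClosed K]
    {φ : MvPolynomial τ K →ₐ[K] MvPolynomial σ K} {c : τ → K}
    (hc : MvPolynomial.pointToPoint c ∈ Set.range (PrimeSpectrum.comap φ.toRingHom)) :
    ∃ p, ∀ t, MvPolynomial.eval p (φ (.X t)) = c t := by
  obtain ⟨P, hP⟩ := hc
  obtain ⟨M, hM, hPM⟩ := P.asIdeal.exists_le_maximal P.isPrime.ne_top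
  obtain ⟨p, rfl⟩ := MvPolynomial.isMaximal_iff_eq_vanishingIdeal_singleton.1 hM
  refine ⟨p, fun t => ?_⟩
  have hmem : .X t - .C (c t) ∈ (MvPolynomial.pointToPoint (k := K) c).asIdeal :=
    (MvPolynomial.mem_vanishingIdeal_singleton_iff _ _).2 (by simp)
  rw [← hP] at hmem
  have := (MvPolynomial.mem_vanishingIdeal_singleton_iff _ _).1 (hPM hmem)
  simpa [MvPolynomial.aeval_eq_eval, sub_eq_zero, ← MvPolynomial.algebraMap_eq] using this

theorem exists_forall_eval_ne_zero_exists_eval_eq [Finite τ] [IsAlgClosed K]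
    {φ : MvPolynomial τ K →ₐ[K] MvPolynomial σ K} (hφ : Function.Injective φ) :
    ∃ G : MvPolynomial τ K, G ≠ 0 ∧ ∀ c, MvPolynomial.eval c G ≠ 0 →
      ∃ p, ∀ t, MvPolynomial.eval p (φ (.X t)) = c t := by
  have hbot : ⊥ ∈ Set.range (PrimeSpectrum.comap φ.toRingHom) :=
    ⟨⊥, PrimeSpectrum.ext ((RingHom.injective_iff_ker_eq_bot φ.toRingHom).1 hφ)⟩
  obtain ⟨G, hG, hsub⟩ := exists_basicOpen_subset_of_bot_mem
    (PrimeSpectrum.isConstructible_range_comap (finitePresentation_algHom_mvPolynomial φ)) hbot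
  refine ⟨G, hG, fun c hc => exists_eval_eq_of_pointToPoint_mem_range (hsub ?_)⟩
  exact fun hGc => hc ((MvPolynomial.mem_vanishingIdeal_singleton_iff _ _).1 hGc)

/-- Chevalley's theorem for a polynomial map `g`, whose dominance is expressed by `hdom`. -/
theorem IsPolyMap.eventually_generic_mem_range {E F : Type*} [AddCommGroup E] [Module K E]
    [AddCommGroup F] [Module K F] [FiniteDimensional K E] [FiniteDimensional K F] [IsAlgClosed K]
    {g : E → F} (hg : IsPolyMap K g) (hdom : ∀ h ∈ polyFun K F, h ∘ g = 0 → h = 0) :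
    ∀ᶠ y in generic K F, y ∈ Set.range g := by
  obtain ⟨e⟩ : Nonempty (E ≃ₗ[K] (Fin _ → K)) := ⟨(Module.finBasis K E).equivFun⟩
  obtain ⟨e'⟩ : Nonempty (F ≃ₗ[K] (Fin _ → K)) := ⟨(Module.finBasis K F).equivFun⟩
  choose f hf using fun t => (mem_polyFun_iff_exists_mvPolynomial e).1
    (hg (LinearMap.proj t ∘ₗ e'.toLinearMap))
  have hinj : Function.Injective (MvPolynomial.aeval (R := K) f) := by
    rw [injective_iff_map_eq_zero]
    intro G hG
    have hzero := hdom _ ((mem_polyFun_iff_exists_mvPolynomial e').2 ⟨G, fun _ => rfl⟩)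
      (funext fun x => by
        have := congrArg (MvPolynomial.aeval (e x)) hG
        rw [map_zero, MvPolynomial.comp_aeval_apply] at this
        simp only [MvPolynomial.aeval_eq_eval, hf] at this
        exact this)
    exact MvPolynomial.funext fun c => by
      simpa using congrFun hzero (e'.symm c)
  obtain ⟨G, hG0, hG⟩ := exists_forall_eval_ne_zero_exists_eval_eq hinj
  refine (eventually_generic_iff_exists_mvPolynomial e').2 ⟨G, hG0, fun y hy => ?_⟩
  obtain ⟨p, hp⟩ := hG _ hy
  refine ⟨e.symm p, e'.injective (funext fun t => ?_)⟩
  rw [← hp t, MvPolynomial.aeval_X, ← e.apply_symm_apply p, hf t, e.apply_symm_apply]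
  rfl

end Dominance

section Submersion

open Filter
open scoped Topology

variable {𝕜 E F : Type*} [NontriviallyNormedField 𝕜] [NormedAddCommGroup E] [NormedSpace 𝕜 E]
  [NormedAddCommGroup F] [NormedSpace 𝕜 F]

theorem eq_zero_of_mem_polyFun_of_eventuallyEq_zero {g : E → 𝕜} (hg : g ∈ polyFun 𝕜 E) {x : E}
    (h : g =ᶠ[𝓝 x] 0) : g = 0 := by
  ext y
  obtain ⟨P, hP⟩ := exists_polynomial_eval_eq_line hg x (y - x)
  have hline : Tendsto (fun t : 𝕜 => x + t • (y - x)) (𝓝 0) (𝓝 x) :=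
    Continuous.tendsto' (by fun_prop) _ _ (by simp)
  have hroots : ∀ᶠ t in 𝓝 0, P.eval t = 0 := (hline.eventually h).mono fun t ht => by
    rw [hP, ht, Pi.zero_apply]
  have hP0 : P = 0 := P.eq_zero_of_infinite_isRoot (infinite_of_mem_nhds 0 hroots)
  simpa [hP0] using (hP 1).symm

/-- By the inverse function theorem, the range of a map with a surjective derivative is Zariski
dense. -/
theorem IsPolyMap.eventually_generic_mem_range_of_hasStrictFDerivAt [CompleteSpace 𝕜]
    [IsAlgClosed 𝕜] [FiniteDimensional 𝕜 E] [FiniteDimensional 𝕜 F] {g : E → F}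
    (hg : IsPolyMap 𝕜 g) {a : E} {g' : E →L[𝕜] F} (hd : HasStrictFDerivAt g g' a)
    (hsurj : Function.Surjective g') : ∀ᶠ y in generic 𝕜 F, y ∈ Set.range g := by
  have := FiniteDimensional.complete 𝕜 E
  have := FiniteDimensional.complete 𝕜 F
  refine hg.eventually_generic_mem_range fun h hh hcomp =>
    eq_zero_of_mem_polyFun_of_eventuallyEq_zero hh (x := g a) ?_
  rw [← hd.map_nhds_eq_of_surj (LinearMap.range_eq_top.2 hsurj)]
  exact eventually_map (P := fun y => h y = 0) |>.2 (.of_forall (congrFun hcomp))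

theorem frequently_eq_and_ne_of_hasStrictFDerivAt [CompleteSpace E] [CompleteSpace 𝕜]
    [FiniteDimensional 𝕜 F] {f : E → F} {f' : E →L[𝕜] F} {a : E} (hf : HasStrictFDerivAt f f' a)
    (hsurj : Function.Surjective f') {φ : E →L[𝕜] 𝕜} {v : E} (hv : f' v = 0) (hφ : φ v ≠ 0) :
    ∃ᶠ y in 𝓝 a, f y = f a ∧ φ y ≠ φ a := by
  have := FiniteDimensional.complete 𝕜 F
  have hprod : Function.Surjective (f'.prod φ) := by
    rintro ⟨y, c⟩
    obtain ⟨u, rfl⟩ := hsurj y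
    refine ⟨u + ((c - φ u) / φ v) • v, Prod.ext ?_ ?_⟩
    · simp [hv]
    · simp [hφ]
  have hmap := (hf.prodMk φ.hasStrictFDerivAt).map_nhds_eq_of_surj
    (LinearMap.range_eq_top.2 hprod)
  have hfiber : ∃ᶠ c in 𝓝 (φ a), c ≠ φ a :=
    frequently_mem_iff_neBot.2 (inferInstanceAs (𝓝[≠] (φ a)).NeBot)
  have hslice : Tendsto (fun c => (f a, c)) (𝓝 (φ a)) (𝓝 (f a, φ a)) :=
    (Continuous.prodMk_right (f a)).tendsto _
  have hfreq : ∃ᶠ z in 𝓝 (f a, φ a), z.1 = f a ∧ z.2 ≠ φ a :=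
    hslice.frequently (hfiber.mono fun c hc => ⟨rfl, hc⟩)
  rwa [← hmap, frequently_map] at hfreq

end Submersion

section Segre

variable {𝕜 ι r : Type*} {κ : ι → Type*} [NontriviallyNormedField 𝕜]

/-- The map scaling each factor of the family `x` separately, whose range consists of the families
with Segre image proportional to that of `x`. -/
def factorScaling (x : ∀ j, κ j → 𝕜) : (ι → 𝕜) →ₗ[𝕜] ∀ j, κ j → 𝕜 :=
  LinearMap.pi fun j => (LinearMap.proj j).smulRight (x j)

theorem mem_range_factorScaling {x y : ∀ j, κ j → 𝕜} :
    y ∈ LinearMap.range (factorScaling x) ↔ ∀ j, ∃ t : 𝕜, t • x j = y j := by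
  simp only [LinearMap.mem_range, funext_iff (g := y)]
  exact (Classical.skolem (p := fun j t => t • x j = y j)).symm

theorem self_mem_range_factorScaling (x : ∀ j, κ j → 𝕜) :
    x ∈ LinearMap.range (factorScaling x) :=
  mem_range_factorScaling.2 fun _ => ⟨1, one_smul _ _⟩

variable [Fintype ι]

/-- The Segre map, sending vectors `x j` to the family of products `∏ j, x j (f j)`, which are the
coordinates of their tensor product. -/
def seg : ContinuousMultilinearMap 𝕜 (fun j => κ j → 𝕜) ((∀ j, κ j) → 𝕜) :=
  ContinuousMultilinearMap.pi fun f =>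
    (ContinuousMultilinearMap.mkPiAlgebra 𝕜 ι 𝕜).compContinuousLinearMap
      fun j => ContinuousLinearMap.proj (f j)

theorem seg_apply (x : ∀ j, κ j → 𝕜) (f : ∀ j, κ j) : seg x f = ∏ j, x j (f j) := by
  simp [seg]

theorem seg_single [∀ j, DecidableEq (κ j)] (f : ∀ j, κ j) :
    seg (fun j => (Pi.single (f j) 1 : κ j → 𝕜)) = Pi.single f 1 := by
  classical
  ext g
  simp only [seg_apply, Pi.single_apply, Fintype.prod_ite_zero, Finset.prod_const_one]
  exact if_congr funext_iff.symm rfl rfl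

theorem sum_vecMulVec_col_seg_single [DecidableEq ι] [∀ j, Fintype (κ j)] [∀ j, DecidableEq (κ j)]
    {m : Type*} (M : Matrix m (∀ j, κ j) 𝕜) :
    ∑ f, Matrix.vecMulVec (M.col f) (seg fun j => Pi.single (f j) 1) = M := by
  ext i f
  simp [seg_single, Matrix.sum_apply, Matrix.vecMulVec_apply, Pi.single_apply]

theorem linearIndependent_seg_single [∀ j, Finite (κ j)] [∀ j, DecidableEq (κ j)]
    (e : r ↪ ∀ j, κ j) :
    LinearIndependent 𝕜 fun l => seg fun j => (Pi.single (e l j) 1 : κ j → 𝕜) := by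
  have := fun j => Fintype.ofFinite (κ j)
  classical
  have := (Pi.basisFun 𝕜 (∀ j, κ j)).linearIndependent.comp e e.injective
  simpa only [seg_single, Function.comp_def, Pi.basisFun_apply] using this

theorem IsPolyMap.seg [∀ j, Finite (κ j)] {E : Type*} [AddCommGroup E] [Module 𝕜 E]
    {X : E → ∀ j, κ j → 𝕜} (hX : ∀ j, IsPolyMap 𝕜 fun p => X p j) :
    IsPolyMap 𝕜 fun p => seg (X p) :=
  .pi fun f => .of_mem_polyFun <| by
    simp only [seg_apply]
    exact fun_prod_mem_polyFun _ fun j _ => ((hX j).apply (f j)).mem_polyFun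

theorem eventually_generic_linearIndependent_seg [∀ j, Fintype (κ j)] [DecidableEq ι] [Fintype r]
    (hr : Fintype.card r ≤ Fintype.card (∀ j, κ j)) :
    ∀ᶠ x in generic 𝕜 (r → ∀ j, κ j → 𝕜), LinearIndependent 𝕜 fun l => seg (x l) := by
  classical
  obtain ⟨e⟩ := Function.Embedding.nonempty_of_card_le hr
  have hseg (l : r) : IsPolyMap 𝕜 fun x : r → ∀ j, κ j → 𝕜 => seg (x l) :=
    .seg fun j => (IsPolyMap.id.apply l).apply j
  exact eventually_generic_linearIndependent hseg
    (x₀ := fun l j => Pi.single (e l j) 1) (linearIndependent_seg_single e)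

theorem seg_update_apply [DecidableEq ι] (x : ∀ j, κ j → 𝕜) (f : ∀ j, κ j) (j : ι) (l : κ j) :
    seg x (Function.update f j l) = x j l * ∏ i ∈ Finset.univ.erase j, x i (f i) := by
  rw [seg_apply, ← Finset.mul_prod_erase _ _ (Finset.mem_univ j), Function.update_self]
  congr 1
  refine Finset.prod_congr rfl fun i hi => ?_
  rw [Function.update_of_ne (Finset.ne_of_mem_erase hi)]

theorem mem_range_factorScaling_of_seg_eq_smul {x y : ∀ j, κ j → 𝕜} {c : 𝕜}
    (h : seg y = c • seg x) (h0 : seg y ≠ 0) : y ∈ LinearMap.range (factorScaling x) := by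
  classical
  refine mem_range_factorScaling.2 fun j => ?_
  obtain ⟨f, hf⟩ := Function.ne_iff.1 h0
  have hf' : ∏ i ∈ Finset.univ.erase j, y i (f i) ≠ 0 := by
    rw [seg_apply, ← Finset.mul_prod_erase _ _ (Finset.mem_univ j)] at hf
    exact right_ne_zero_of_mul hf
  refine ⟨c * (∏ i ∈ Finset.univ.erase j, x i (f i)) / ∏ i ∈ Finset.univ.erase j, y i (f i), ?_⟩
  ext l
  have hl := congrFun h (Function.update f j l)
  rw [Pi.smul_apply, seg_update_apply, seg_update_apply, smul_eq_mul] at hl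
  rw [Pi.smul_apply, smul_eq_mul, div_mul_eq_mul_div, div_eq_iff hf', hl]
  ring

section TangentSpan

variable [DecidableEq ι] [Fintype r]

/-- The map whose range is the sum of the tangent space to the Segre cone at `seg (x i)` and of the
span of the points `seg (x l)`. -/
def tangentSpanMap [CompleteSpace 𝕜] (x : r → ∀ j, κ j → 𝕜) (i : r) :
    (∀ j, κ j → 𝕜) × (r → 𝕜) →L[𝕜] (∀ j, κ j) → 𝕜 :=
  (seg.linearDeriv (x i)).coprod
    (Fintype.linearCombination 𝕜 fun l => seg (x l)).toContinuousLinearMap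

variable [CompleteSpace 𝕜]

theorem tangentSpanMap_apply (x : r → ∀ j, κ j → 𝕜) (i : r)
    (v : (∀ j, κ j → 𝕜) × (r → 𝕜)) :
    tangentSpanMap x i v =
      ∑ j, seg (Function.update (x i) j (v.1 j)) + ∑ l, v.2 l • seg (x l) := by
  simp [tangentSpanMap, Fintype.linearCombination_apply]

theorem hasStrictFDerivAt_seg_add_sum_smul [∀ j, Finite (κ j)] (x : r → ∀ j, κ j → 𝕜) (i : r)
    (z : r → 𝕜) :
    HasStrictFDerivAt (fun y : (∀ j, κ j → 𝕜) × (r → 𝕜) => seg y.1 + ∑ l, y.2 l • seg (x l))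
      (tangentSpanMap x i) (x i, z) := by
  have := fun j => Fintype.ofFinite (κ j)
  have hseg : HasStrictFDerivAt (fun y : (∀ j, κ j → 𝕜) × (r → 𝕜) => seg y.1)
      ((seg.linearDeriv (x i)).comp (.fst 𝕜 _ _)) (x i, z) :=
    HasStrictFDerivAt.comp (x i, z) (seg.hasStrictFDerivAt (x i)) hasStrictFDerivAt_fst
  have hlin := ((Fintype.linearCombination 𝕜 fun l => seg (x l)).toContinuousLinearMap.comp
    (.snd 𝕜 (∀ j, κ j → 𝕜) (r → 𝕜))).hasStrictFDerivAt (x := (x i, z))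
  exact hseg.add hlin

/-- Multi-indices differing from `f₀` in exactly one place; the corresponding standard basis vectors
lie in the tangent space to the Segre cone at the one indexed by `f₀`. -/
def updateOne (f₀ : ∀ j, κ j) (y : Σ j, {c // c ≠ f₀ j}) : ∀ j, κ j :=
  Function.update f₀ y.1 y.2

omit [Fintype ι] in
theorem updateOne_injective (f₀ : ∀ j, κ j) : Function.Injective (updateOne f₀) := by
  rintro ⟨j, c⟩ ⟨j', c'⟩ h
  have hj := congrFun h j
  rw [updateOne, Function.update_self] at hj
  obtain rfl | hne := eq_or_ne j j'
  · rw [updateOne, Function.update_self] at hj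
    exact congrArg _ (Subtype.ext hj)
  · rw [updateOne, Function.update_of_ne hne] at hj
    exact absurd hj c.2

omit [Fintype ι] in
theorem updateOne_ne (f₀ : ∀ j, κ j) (y : Σ j, {c // c ≠ f₀ j}) : updateOne f₀ y ≠ f₀ := fun h =>
  y.2.2 (by simpa [updateOne] using congrFun h y.1)

variable [∀ j, Fintype (κ j)]

omit [DecidableEq ι] in
theorem card_sigma_ne_add_card [∀ j, DecidableEq (κ j)] (f₀ : ∀ j, κ j) :
    Fintype.card (Σ j, {c // c ≠ f₀ j}) + Fintype.card ι = ∑ j, Fintype.card (κ j) := by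
  have hcard (j : ι) : Fintype.card {c // c ≠ f₀ j} + 1 = Fintype.card (κ j) := by
    have := Fintype.card_pos_iff.2 ⟨f₀ j⟩
    have : Fintype.card {c // c ≠ f₀ j} = Fintype.card (κ j) - 1 := Set.card_ne_eq _
    omega
  simp only [Fintype.card_sigma, ← Finset.sum_congr rfl fun j _ => hcard j,
    Finset.sum_add_distrib, Finset.sum_const, Finset.card_univ, smul_eq_mul, mul_one]

theorem sum_card_lt_card_pi_add_card [∀ j, Nonempty (κ j)] :
    ∑ j, Fintype.card (κ j) < Fintype.card (∀ j, κ j) + Fintype.card ι := by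
  classical
  let f₀ : ∀ j, κ j := fun _ => Classical.arbitrary _
  rw [← card_sigma_ne_add_card f₀]
  exact Nat.add_lt_add_right (Fintype.card_lt_of_injective_of_notMem _ (updateOne_injective f₀)
    fun ⟨y, hy⟩ => updateOne_ne f₀ y hy) _

theorem exists_embedding_forall_notMem_range (i : r)
    (hr : Fintype.card r ≤ Fintype.card (∀ j, κ j))
    (hκ : Fintype.card (∀ j, κ j) + Fintype.card ι ≤ ∑ j, Fintype.card (κ j) + Fintype.card r) :
    ∃ e : r ↪ ∀ j, κ j, ∀ f ∉ Set.range e, ∃ j c, f = Function.update (e i) j c := by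
  classical
  obtain ⟨f₀⟩ : Nonempty (∀ j, κ j) :=
    Fintype.card_pos_iff.1 ((Fintype.card_pos_iff.2 ⟨i⟩).trans_le hr)
  let N := Finset.univ.image (updateOne f₀)
  have hN : N.card + Fintype.card ι = ∑ j, Fintype.card (κ j) := by
    rw [Finset.card_image_of_injective _ (updateOne_injective f₀), Finset.card_univ,
      card_sigma_ne_add_card]
  obtain ⟨S, hNS, -, hSr⟩ := Finset.exists_subsuperset_card_eq (Finset.subset_univ Nᶜ)
    (n := Fintype.card r) (by rw [Finset.card_compl]; omega) hr
  have hf₀ : f₀ ∈ S := hNS (Finset.mem_compl.2 fun h => by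
    obtain ⟨y, -, hy⟩ := Finset.mem_image.1 h
    exact updateOne_ne f₀ y hy)
  let e₀ : r ≃ S := (Fintype.equivFin r).trans (Finset.equivFinOfCardEq hSr).symm
  let e : r ≃ S := (Equiv.swap i (e₀.symm ⟨f₀, hf₀⟩)).trans e₀
  have hei : (e i : ∀ j, κ j) = f₀ := by simp [e]
  refine ⟨e.toEmbedding.trans (.subtype _), fun f hf => ?_⟩
  have hfN : f ∈ N := by
    by_contra hfN
    exact hf ⟨e.symm ⟨f, hNS (Finset.mem_compl.2 hfN)⟩, by simp⟩
  obtain ⟨⟨j, c⟩, -, rfl⟩ := Finset.mem_image.1 hfN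
  exact ⟨j, c, congrArg (Function.update · j c.1) hei.symm⟩

theorem exists_tangentSpanMap_surjective (i : r)
    (hr : Fintype.card r ≤ Fintype.card (∀ j, κ j))
    (hκ : Fintype.card (∀ j, κ j) + Fintype.card ι ≤ ∑ j, Fintype.card (κ j) + Fintype.card r) :
    ∃ x : r → ∀ j, κ j → 𝕜, Function.Surjective (tangentSpanMap x i) := by
  classical
  obtain ⟨e, he⟩ := exists_embedding_forall_notMem_range i hr hκ
  refine ⟨fun l j => Pi.single (e l j) 1, ?_⟩
  rw [← ContinuousLinearMap.coe_coe, ← LinearMap.range_eq_top, eq_top_iff,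
    ← (Pi.basisFun 𝕜 _).span_eq, Submodule.span_le]
  rintro _ ⟨f, rfl⟩
  rw [Pi.basisFun_apply]
  by_cases hf : f ∈ Set.range e
  · obtain ⟨l, rfl⟩ := hf
    refine ⟨(0, Pi.single l 1), ?_⟩
    simp [tangentSpanMap, Fintype.linearCombination_apply_single, seg_single,
      -ContinuousMultilinearMap.linearDeriv_apply]
  · obtain ⟨j, c, rfl⟩ := he f hf
    refine ⟨(Pi.single j (Pi.single c 1), 0), ?_⟩
    rw [ContinuousLinearMap.coe_coe, tangentSpanMap_apply, Finset.sum_eq_single j]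
    · simp only [Pi.zero_apply, zero_smul, Finset.sum_const_zero, add_zero, Pi.single_eq_same,
        ← seg_single]
      congr 1
      ext j' : 1
      obtain rfl | hne := eq_or_ne j' j
      · simp
      · simp [Function.update_of_ne hne]
    · intro j' _ hne
      dsimp only
      rw [Pi.single_eq_of_ne hne]
      exact seg.map_update_zero _ _
    · simp

theorem eventually_generic_tangentSpanMap_surjective (i : r)
    (hr : Fintype.card r ≤ Fintype.card (∀ j, κ j))
    (hκ : Fintype.card (∀ j, κ j) + Fintype.card ι ≤ ∑ j, Fintype.card (κ j) + Fintype.card r) :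
    ∀ᶠ x in generic 𝕜 (r → ∀ j, κ j → 𝕜), Function.Surjective (tangentSpanMap x i) := by
  obtain ⟨x₀, hx₀⟩ := exists_tangentSpanMap_surjective (𝕜 := 𝕜) i hr hκ
  refine eventually_generic_surjective (x₀ := x₀)
    (T := fun x => (tangentSpanMap x i).toLinearMap) (fun v => ?_) hx₀
  simp only [ContinuousLinearMap.coe_coe, tangentSpanMap_apply]
  refine .add (.sum _ fun j _ => .seg fun j' => ?_)
    (.sum _ fun l _ => .smul (Subalgebra.algebraMap_mem _ (v.2 l))
      (.seg fun j => (IsPolyMap.id.apply l).apply j))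
  obtain rfl | hne := eq_or_ne j' j
  · simpa only [Function.update_self] using .const _
  · simpa only [Function.update_of_ne hne] using (IsPolyMap.id.apply i).apply j'

/-- The kernel is too large to consist of infinitesimal rescalings of the factors of `x i`. -/
theorem exists_ker_tangentSpanMap_notMem_range {x : r → ∀ j, κ j → 𝕜} {i : r}
    (hκ : Fintype.card (∀ j, κ j) + Fintype.card ι < ∑ j, Fintype.card (κ j) + Fintype.card r)
    (hli : LinearIndependent 𝕜 fun l => seg (x l))
    (hsurj : Function.Surjective (tangentSpanMap x i)) :
    ∃ v, tangentSpanMap x i v = 0 ∧ v.1 ∉ LinearMap.range (factorScaling (x i)) := by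
  by_contra! hcon
  let T := (tangentSpanMap x i).toLinearMap
  let π := (LinearMap.fst 𝕜 (∀ j, κ j → 𝕜) (r → 𝕜)).domRestrict (LinearMap.ker T)
  have hπ : Function.Injective π := by
    rw [injective_iff_map_eq_zero]
    rintro ⟨⟨u, z⟩, hz⟩ (rfl : u = 0)
    have hz' : ∑ l, z l • seg (x l) = 0 := by
      simpa [T, tangentSpanMap, Fintype.linearCombination_apply,
        -ContinuousMultilinearMap.linearDeriv_apply] using hz
    obtain rfl : z = 0 := funext (Fintype.linearIndependent_iff.1 hli z hz')
    rfl
  have hker : Module.finrank 𝕜 (LinearMap.ker T) ≤ Fintype.card ι := calc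
    _ = Module.finrank 𝕜 (LinearMap.range π) := (LinearMap.finrank_range_of_inj hπ).symm
    _ ≤ Module.finrank 𝕜 (LinearMap.range (factorScaling (x i))) :=
      Submodule.finrank_mono (by rintro _ ⟨v, rfl⟩; exact hcon v.1 v.2)
    _ ≤ Fintype.card ι := (LinearMap.finrank_range_le _).trans (by simp)
  have hsource : Module.finrank 𝕜 ((∀ j, κ j → 𝕜) × (r → 𝕜)) =
      ∑ j, Fintype.card (κ j) + Fintype.card r := by
    rw [Module.finrank_prod, Module.finrank_pi_fintype]
    simp only [Module.finrank_fintype_fun_eq_card]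
  have hdim := T.finrank_range_add_finrank_ker
  rw [LinearMap.range_eq_top.2 hsurj, finrank_top, hsource,
    Module.finrank_fintype_fun_eq_card] at hdim
  omega

/-- A point of the Segre variety in the span of the points `seg (x l)`, close to `seg (x i)` on a
curve whose tangent direction does not come from rescaling factors. -/
theorem exists_seg_eq_sum_not_proportional {x : r → ∀ j, κ j → 𝕜} {i : r}
    (hκ : Fintype.card (∀ j, κ j) + Fintype.card ι < ∑ j, Fintype.card (κ j) + Fintype.card r)
    (hli : LinearIndependent 𝕜 fun l => seg (x l))
    (hsurj : Function.Surjective (tangentSpanMap x i)) :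
    ∃ (y : ∀ j, κ j → 𝕜) (z : r → 𝕜), seg y = ∑ l, z l • seg (x l) ∧ z i ≠ 0 ∧
      ∀ c : 𝕜, seg y ≠ c • seg (x i) := by
  classical
  obtain ⟨v, hv, hvx⟩ := exists_ker_tangentSpanMap_notMem_range hκ hli hsurj
  obtain ⟨φ, hφv, hφ⟩ := Submodule.exists_le_ker_of_notMem hvx
  have hf := hasStrictFDerivAt_seg_add_sum_smul x i (Pi.single i (-1))
  have hz : ∀ᶠ y : (∀ j, κ j → 𝕜) × (r → 𝕜) in nhds (x i, Pi.single i (-1)), y.2 i ≠ 0 :=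
    ContinuousAt.eventually_ne (by fun_prop) (by simp)
  obtain ⟨⟨y, z⟩, ⟨hfy, hφy⟩, hzi⟩ := ((frequently_eq_and_ne_of_hasStrictFDerivAt hf hsurj
    (φ := φ.toContinuousLinearMap.comp (.fst 𝕜 _ _)) hv hφv).and_eventually hz).exists
  have hy : seg y = ∑ l, (-z) l • seg (x l) := by
    have hfy0 : seg y + ∑ l, z l • seg (x l) = 0 := hfy.trans (by simp [Pi.single_apply])
    simpa using eq_neg_of_add_eq_zero_left hfy0
  refine ⟨y, -z, hy, neg_ne_zero.2 hzi, fun c hc => hφy ?_⟩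
  have hy0 : seg y ≠ 0 := fun h0 =>
    neg_ne_zero.2 hzi (Fintype.linearIndependent_iff.1 hli (-z) (hy ▸ h0) i)
  exact (hφ (mem_range_factorScaling_of_seg_eq_smul hc hy0)).trans
    (hφ (self_mem_range_factorScaling (x i))).symm

end TangentSpan

end Segre

section RankOneMatrices

open Matrix

variable {𝕜 l m n : Type*} [Field 𝕜]

theorem rank_sum_vecMulVec_le [Fintype l] [Fintype n] (w : l → m → 𝕜)
    (u : l → n → 𝕜) : (∑ i, vecMulVec (w i) (u i)).rank ≤ Fintype.card l := by
  have hmul : ∑ i, vecMulVec (w i) (u i) = (of w)ᵀ * of u := by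
    ext b c
    simp [Matrix.sum_apply, vecMulVec_apply, mul_apply]
  rw [hmul]
  exact (rank_mul_le_left _ _).trans (rank_le_card_width _)

theorem sum_vecMulVec_update [Fintype l] [DecidableEq l] (w : l → m → 𝕜) (u : l → n → 𝕜)
    {z : l → 𝕜} {i : l} (hz : z i ≠ 0) :
    ∑ j, vecMulVec (Function.update (fun j => w j - (z j / z i) • w i) i ((z i)⁻¹ • w i) j)
      (Function.update u i (∑ j, z j • u j) j) = ∑ j, vecMulVec (w j) (u j) := by
  let B := vecMulVecBilin 𝕜 𝕜 (m := m) (n := n) (A := 𝕜)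
  calc
    _ = B ((z i)⁻¹ • w i) (∑ j, z j • u j) +
        ∑ j ∈ Finset.univ.erase i, B (w j - (z j / z i) • w i) (u j) := by
      rw [← Finset.add_sum_erase _ _ (Finset.mem_univ i)]
      simp only [Function.update_self]
      refine congrArg _ (Finset.sum_congr rfl fun j hj => ?_)
      rw [Function.update_of_ne (Finset.ne_of_mem_erase hj),
        Function.update_of_ne (Finset.ne_of_mem_erase hj)]
      rfl
    _ = B ((z i)⁻¹ • w i) (∑ j, z j • u j) + ∑ j, B (w j - (z j / z i) • w i) (u j) := by
      rw [Finset.sum_erase _ (by simp [div_self hz])]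
    _ = ∑ j, B (w j) (u j) := by
      simp [Finset.sum_sub_distrib, smul_smul, div_eq_inv_mul, mul_comm]

theorem eq_single_of_vecMulVec_eq [DecidableEq l] {w : l → m → 𝕜}
    (hw : LinearIndependent 𝕜 w) {i j : l} {u u' : n → 𝕜}
    (h : vecMulVec (w i) u = vecMulVec (w j) u') :
    u = (Pi.single j u' : l → n → 𝕜) i := by
  ext c
  have hc : Finsupp.linearCombination 𝕜 w (.single i (u c)) =
      Finsupp.linearCombination 𝕜 w (.single j (u' c)) := by
    ext b
    simpa [vecMulVec_apply, mul_comm] using congrFun (congrFun h b) c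
  have hi := DFunLike.congr_fun (hw hc) i
  rw [Finsupp.single_eq_same, Finsupp.single_apply] at hi
  obtain rfl | hij := eq_or_ne j i
  · simpa using hi
  · simpa [hij, hij.symm] using hi

end RankOneMatrices

section MatrixRank

open Matrix

variable {𝕜 m n : Type*} [Field 𝕜] [Infinite 𝕜] [Fintype m] [Fintype n]

theorem eventually_generic_linearIndependent_row (h : Fintype.card m ≤ Fintype.card n) :
    ∀ᶠ M in generic 𝕜 (Matrix m n 𝕜), LinearIndependent 𝕜 M.row := by
  classical
  obtain ⟨e⟩ := Function.Embedding.nonempty_of_card_le h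
  exact eventually_generic_linearIndependent (u := fun M : Matrix m n 𝕜 => M.row)
    (x₀ := fun i => Pi.basisFun 𝕜 n (e i))
    (fun i => .of_linearMap (LinearMap.proj (φ := fun _ : m => n → 𝕜) i))
    ((Pi.basisFun 𝕜 n).linearIndependent.comp e e.injective)

theorem eventually_generic_rank_eq :
    ∀ᶠ M in generic 𝕜 (Matrix m n 𝕜), M.rank = min (Fintype.card m) (Fintype.card n) := by
  obtain h | h := le_total (Fintype.card m) (Fintype.card n)
  · rw [min_eq_left h]
    exact (eventually_generic_linearIndependent_row h).mono fun M hM => hM.rank_matrix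
  · rw [min_eq_right h]
    refine ((tendsto_generic (transposeLinearEquiv m n 𝕜 𝕜).surjective).eventually
      (eventually_generic_linearIndependent_row h)).mono fun M hM => ?_
    rw [← hM.rank_matrix]
    exact M.rank_transpose.symm

end MatrixRank

section SegreRows

open Matrix

variable {𝕜 ι l : Type*} {κ : ι → Type*} [NontriviallyNormedField 𝕜] [CompleteSpace 𝕜]
  [Fintype ι] [Fintype l]

theorem hasStrictFDerivAt_sum_smul_seg [DecidableEq ι] [DecidableEq l] [∀ j, Finite (κ j)]
    (x : l → ∀ j, κ j → 𝕜) :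
    HasStrictFDerivAt
      (fun (p : (l → ∀ j, κ j → 𝕜) × (l → l → 𝕜)) c => ∑ i, p.2 i c • seg (p.1 i))
      (.pi fun c => (tangentSpanMap x c).comp
        (((ContinuousLinearMap.proj c).comp (.fst 𝕜 _ _)).prod
          (.pi fun i => (ContinuousLinearMap.proj c).comp
            ((ContinuousLinearMap.proj i).comp (.snd 𝕜 _ (l → l → 𝕜))))))
      (x, fun i => Pi.single i 1) := by
  have := fun j => Fintype.ofFinite (κ j)
  refine hasStrictFDerivAt_pi.2 fun c => ?_
  have hw (i : l) := ((ContinuousLinearMap.proj (φ := fun _ : l => 𝕜) c).comp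
    ((ContinuousLinearMap.proj i).comp
      (.snd 𝕜 (l → ∀ j, κ j → 𝕜) (l → l → 𝕜)))).hasStrictFDerivAt (x := (x, fun i => Pi.single i 1))
  have hs (i : l) := HasStrictFDerivAt.comp (x, fun i => Pi.single i 1)
    ((seg (𝕜 := 𝕜) (κ := κ)).hasStrictFDerivAt (x i))
    ((ContinuousLinearMap.proj (φ := fun _ : l => ∀ j, κ j → 𝕜) i).comp
      (.fst 𝕜 _ (l → l → 𝕜))).hasStrictFDerivAt
  refine (HasStrictFDerivAt.fun_sum fun i _ => (hw i).smul (hs i)).congr_fderiv ?_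
  refine ContinuousLinearMap.ext fun v => ?_
  simp [tangentSpanMap, Finset.sum_add_distrib, Pi.single_apply, Fintype.linearCombination_apply,
    -ContinuousMultilinearMap.linearDeriv_apply]

theorem eventually_generic_exists_sum_vecMulVec_seg [IsAlgClosed 𝕜] [DecidableEq ι]
    [∀ j, Fintype (κ j)]
    (hl : Fintype.card l ≤ Fintype.card (∀ j, κ j))
    (hκ : Fintype.card (∀ j, κ j) + Fintype.card ι ≤ ∑ j, Fintype.card (κ j) + Fintype.card l) :
    ∀ᶠ M in generic 𝕜 (Matrix l (∀ j, κ j) 𝕜), ∃ (w : l → l → 𝕜) (x : l → ∀ j, κ j → 𝕜),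
      ∑ i, vecMulVec (w i) (seg (x i)) = M := by
  classical
  obtain ⟨x, hx⟩ := (Filter.eventually_all.2 fun i : l =>
    eventually_generic_tangentSpanMap_surjective (𝕜 := 𝕜) i hl hκ).exists
  have hx' : IsPolyMap 𝕜 fun p : (l → ∀ j, κ j → 𝕜) × (l → l → 𝕜) => p.1 :=
    .of_linearMap (LinearMap.fst 𝕜 (l → ∀ j, κ j → 𝕜) (l → l → 𝕜))
  have hw' : IsPolyMap 𝕜 fun p : (l → ∀ j, κ j → 𝕜) × (l → l → 𝕜) => p.2 :=
    .of_linearMap (LinearMap.snd 𝕜 (l → ∀ j, κ j → 𝕜) (l → l → 𝕜))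
  have hpoly : IsPolyMap 𝕜
      fun (p : (l → ∀ j, κ j → 𝕜) × (l → l → 𝕜)) c => ∑ i, p.2 i c • seg (p.1 i) :=
    .pi fun c => .sum _ fun i _ =>
      .smul ((hw'.apply i).apply c).mem_polyFun (.seg fun j => (hx'.apply i).apply j)
  refine (hpoly.eventually_generic_mem_range_of_hasStrictFDerivAt
    (hasStrictFDerivAt_sum_smul_seg x) fun M => ?_).mono ?_
  · choose v hv using fun c => hx c (M c)
    exact ⟨(fun c => (v c).1, fun i c => (v c).2 i), funext hv⟩
  · rintro _ ⟨⟨x, w⟩, rfl⟩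
    refine ⟨w, x, ?_⟩
    ext c f
    simp [Matrix.sum_apply, vecMulVec_apply]

/-- Replacing the point `seg (x i)` by another point of the Segre variety in the span of the
`seg (x l)` only changes the coefficients `w`. -/
theorem exists_sum_vecMulVec_seg_eq_ne [DecidableEq ι] [∀ j, Fintype (κ j)] {m : Type*}
    {x : l → ∀ j, κ j → 𝕜} {w : l → m → 𝕜} {i : l}
    (hκ : Fintype.card (∀ j, κ j) + Fintype.card ι < ∑ j, Fintype.card (κ j) + Fintype.card l)
    (hx : LinearIndependent 𝕜 fun j => seg (x j)) (hsurj : Function.Surjective (tangentSpanMap x i))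
    (hw : LinearIndependent 𝕜 w) :
    ∃ (y : l → ∀ j, κ j → 𝕜) (w' : l → m → 𝕜), (∀ j, seg (y j) ≠ 0) ∧ (∀ j, w' j ≠ 0) ∧
      ∑ j, vecMulVec (w' j) (seg (y j)) = ∑ j, vecMulVec (w j) (seg (x j)) ∧
      ∀ j, vecMulVec (w' i) (seg (y i)) ≠ vecMulVec (w j) (seg (x j)) := by
  classical
  obtain ⟨y, z, hy, hz, hne⟩ := exists_seg_eq_sum_not_proportional hκ hx hsurj
  have hseg (j : l) : seg (Function.update x i y j) =
      Function.update (fun j => seg (x j)) i (∑ j, z j • seg (x j)) j := by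
    rw [← hy]
    exact Function.apply_update (fun _ => seg) x i y j
  refine ⟨Function.update x i y,
    Function.update (fun j => w j - (z j / z i) • w i) i ((z i)⁻¹ • w i), fun j => ?_, fun j => ?_,
    ?_, fun j hj => ?_⟩
  · obtain rfl | hji := eq_or_ne j i
    · simpa only [Function.update_self, zero_smul] using hne 0
    · simpa only [Function.update_of_ne hji] using hx.ne_zero j
  · obtain rfl | hji := eq_or_ne j i
    · simpa only [Function.update_self] using smul_ne_zero (inv_ne_zero hz) (hw.ne_zero j)
    · rw [Function.update_of_ne hji]
      intro h0
      exact one_ne_zero ((LinearIndepOn.pair_iff _ hji).1 (hw.linearIndepOn _) 1 (-(z j / z i))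
        (by simpa [sub_eq_add_neg] using h0)).1
  · simp only [hseg]
    exact sum_vecMulVec_update w (fun j => seg (x j)) hz
  · rw [Function.update_self, Function.update_self, smul_vecMulVec, ← vecMulVec_smul] at hj
    have hu := eq_single_of_vecMulVec_eq hw hj
    obtain rfl | hij := eq_or_ne i j
    · exact hne (z i) ((inv_smul_eq_iff₀ hz).1 (by simpa only [Pi.single_eq_same] using hu))
    · refine hne 0 ?_
      simpa [hij, hz] using hu

end SegreRows

section Tensors

open Matrix

/-- The coordinates of a tensor in the standard basis. -/
def coordEquiv {q : ℕ} (a : Fin q → ℕ) : Ten q a ≃ₗ[ℂ] (BIdx q a → ℂ) :=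
  (Basis.piTensorProduct fun j => Pi.basisFun ℂ (Fin (a j + 1))).equivFun

theorem coordEquiv_tprod {q : ℕ} {a : Fin q → ℕ} (v : ∀ j, Fin (a j + 1) → ℂ) :
    coordEquiv a (tprod ℂ v) = seg v := by
  ext f
  simp [coordEquiv, seg_apply]

theorem coordEquiv_fromCoords {q : ℕ} {a : Fin q → ℕ} (c : BIdx q a → ℂ) :
    coordEquiv a (fromCoords a c) = c := by
  rw [← LinearEquiv.eq_symm_apply]
  simp [coordEquiv, fromCoords, basisVec, Module.Basis.equivFun_symm_apply]

theorem eventually_generic_ten_iff {q : ℕ} {a : Fin q → ℕ} {p : Ten q a → Prop} :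
    (∀ᶠ T in generic ℂ (Ten q a), p T) ↔ ∃ F : MvPolynomial (BIdx q a) ℂ,
      (∃ c, MvPolynomial.eval c F ≠ 0) ∧
        ∀ c, MvPolynomial.eval c F ≠ 0 → p (fromCoords a c) := by
  have hF (F : MvPolynomial (BIdx q a) ℂ) : F ≠ 0 ↔ ∃ c, MvPolynomial.eval c F ≠ 0 := by
    rw [← not_forall, not_iff_not, MvPolynomial.funext_iff]
    simp only [map_zero]
  rw [eventually_generic_iff_exists_mvPolynomial (coordEquiv a)]
  refine exists_congr fun F => and_congr (hF F) ⟨fun h c hc => h _ ?_, fun h T hT => ?_⟩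
  · rwa [coordEquiv_fromCoords]
  · have hT' : fromCoords a (coordEquiv a T) = T :=
      (coordEquiv a).injective (coordEquiv_fromCoords _)
    exact hT' ▸ h _ hT

theorem exists_isDecomposable_sum_eq {q : ℕ} {a : Fin q → ℕ} {l : Type*} [Fintype l]
    (v : l → ∀ j, Fin (a j + 1) → ℂ) :
    ∃ r ≤ Fintype.card l, ∃ t : Fin r → Ten q a,
      (∀ i, IsDecomposable (t i)) ∧ ∑ i, t i = ∑ i, tprod ℂ (v i) := by
  classical
  let S : Finset l := {i | ∀ j, v i j ≠ 0}
  refine ⟨S.card, S.card_le_univ, fun i => tprod ℂ (v (S.equivFin.symm i)), fun i => ?_, ?_⟩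
  · exact ⟨_, (Finset.mem_filter.1 (S.equivFin.symm i).2).2, rfl⟩
  · rw [Equiv.sum_comp S.equivFin.symm fun i : S => tprod ℂ (v i),
      Finset.sum_coe_sort S fun i => tprod ℂ (v i)]
    refine Finset.sum_subset (Finset.subset_univ S) fun i _ hi => ?_
    simp only [S, Finset.mem_filter, Finset.mem_univ, true_and, not_forall, not_not] at hi
    obtain ⟨j, hj⟩ := hi
    exact (PiTensorProduct.tprod ℂ).map_coord_zero j hj

variable {n : ℕ} {a : Fin (n + 1) → ℕ}

/-- The flattening of a tensor: the matrix of its coordinates, with rows indexed by the last factor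
and columns by the others. -/
def flatten (a : Fin (n + 1) → ℕ) : Ten (n + 1) a ≃ₗ[ℂ]
    Matrix (Fin (a (Fin.last n) + 1)) (∀ j : Fin n, Fin (a j.castSucc + 1)) ℂ :=
  coordEquiv a ≪≫ₗ LinearEquiv.funCongrLeft ℂ ℂ (Fin.snocEquiv fun j => Fin (a j + 1)) ≪≫ₗ
    LinearEquiv.curry ℂ ℂ _ _

theorem flatten_tprod (v : ∀ j, Fin (a j + 1) → ℂ) :
    flatten a (tprod ℂ v) = vecMulVec (v (Fin.last n)) (seg fun j : Fin n => v j.castSucc) := by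
  ext l f
  change coordEquiv a (tprod ℂ v) (Fin.snoc (α := fun j => Fin (a j + 1)) f l) = _
  simp [coordEquiv_tprod, seg_apply, vecMulVec_apply, Fin.prod_univ_castSucc, mul_comm]

theorem isDecomposable_tprod {v : ∀ j, Fin (a j + 1) → ℂ}
    (hseg : (seg fun j : Fin n => v j.castSucc) ≠ 0) (hlast : v (Fin.last n) ≠ 0) :
    IsDecomposable (tprod ℂ v) :=
  ⟨v, Fin.lastCases hlast fun j hj => hseg (seg.map_coord_zero j hj), rfl⟩

theorem exists_isDecomposable_sum_eq_of_flatten_eq {l : Type*} [Fintype l] {T : Ten (n + 1) a}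
    {w : l → Fin (a (Fin.last n) + 1) → ℂ} {x : l → ∀ j : Fin n, Fin (a j.castSucc + 1) → ℂ}
    (h : ∑ i, vecMulVec (w i) (seg (x i)) = flatten a T) :
    ∃ r ≤ Fintype.card l, ∃ t : Fin r → Ten (n + 1) a,
      (∀ i, IsDecomposable (t i)) ∧ ∑ i, t i = T := by
  have hT : ∑ i, tprod ℂ (Fin.snoc (α := fun j => Fin (a j + 1) → ℂ) (x i) (w i)) = T :=
    (flatten a).injective <| by
      simpa only [map_sum, flatten_tprod, Fin.snoc_last, Fin.snoc_castSucc] using h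
  exact hT ▸ exists_isDecomposable_sum_eq _

theorem tensorRank_le_card {l : Type*} [Fintype l] {T : Ten (n + 1) a}
    {w : l → Fin (a (Fin.last n) + 1) → ℂ} {x : l → ∀ j : Fin n, Fin (a j.castSucc + 1) → ℂ}
    (h : ∑ i, vecMulVec (w i) (seg (x i)) = flatten a T) : tensorRank T ≤ Fintype.card l := by
  obtain ⟨r, hr, t, ht, hsum⟩ := exists_isDecomposable_sum_eq_of_flatten_eq h
  have hle : tensorRank T ≤ r := Nat.sInf_le ⟨t, ht, hsum⟩
  exact hle.trans hr

theorem tensorRank_le_prod (T : Ten (n + 1) a) :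
    tensorRank T ≤ ∏ j : Fin n, (a j.castSucc + 1) := by
  simpa using tensorRank_le_card (sum_vecMulVec_col_seg_single (flatten a T))

theorem exists_isDecomposable_sum_eq_tensorRank (T : Ten (n + 1) a) :
    ∃ t : Fin (tensorRank T) → Ten (n + 1) a, (∀ i, IsDecomposable (t i)) ∧ ∑ i, t i = T := by
  obtain ⟨r, -, h⟩ := exists_isDecomposable_sum_eq_of_flatten_eq
    (sum_vecMulVec_col_seg_single (flatten a T))
  have hne : {k | ∃ t : Fin k → Ten (n + 1) a,
      (∀ i, IsDecomposable (t i)) ∧ ∑ i, t i = T}.Nonempty := ⟨r, h⟩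
  exact Nat.sInf_mem hne

theorem rank_flatten_le_tensorRank (T : Ten (n + 1) a) : (flatten a T).rank ≤ tensorRank T := by
  obtain ⟨t, ht, hsum⟩ := exists_isDecomposable_sum_eq_tensorRank T
  choose v _ hv using ht
  have hT : flatten a T =
      ∑ i, vecMulVec (v i (Fin.last n)) (seg fun j : Fin n => v i j.castSucc) := by
    simp only [← hsum, map_sum, hv, flatten_tprod]
  rw [hT]
  simpa using rank_sum_vecMulVec_le (fun i => v i (Fin.last n)) fun i =>
    seg fun j : Fin n => v i j.castSucc

theorem sum_add_one {n : ℕ} (a : Fin n → ℕ) : ∑ j, (a j + 1) = ∑ j, a j + n := by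
  simp [Finset.sum_add_distrib]

theorem eventually_generic_tensorRank_eq
    (h : ∏ j : Fin n, (a j.castSucc + 1) ≤ ∑ j : Fin n, a j.castSucc + (a (Fin.last n) + 1)) :
    ∀ᶠ T in generic ℂ (Ten (n + 1) a), tensorRank T =
      min (a (Fin.last n) + 1) (∏ j : Fin n, (a j.castSucc + 1)) := by
  have hflat := tendsto_generic (𝕜 := ℂ) (L := (flatten a).toLinearMap) (flatten a).surjective
  have hle : ∀ᶠ T in generic ℂ (Ten (n + 1) a), tensorRank T ≤
      min (a (Fin.last n) + 1) (∏ j : Fin n, (a j.castSucc + 1)) := by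
    obtain hm | hm := le_total (a (Fin.last n) + 1) (∏ j : Fin n, (a j.castSucc + 1))
    · rw [min_eq_left hm]
      refine (hflat.eventually (eventually_generic_exists_sum_vecMulVec_seg
        (by simpa using hm) ?_)).mono fun T ⟨w, x, hT⟩ => ?_
      · simp only [Fintype.card_pi, Fintype.card_fin, sum_add_one]
        omega
      · simpa using tensorRank_le_card hT
    · exact .of_forall fun T => by simpa only [min_eq_right hm] using tensorRank_le_prod T
  filter_upwards [hle, hflat.eventually eventually_generic_rank_eq] with T hT hrank
  refine hT.antisymm ?_
  simpa using hrank.symm.trans_le (rank_flatten_le_tensorRank T)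

end Tensors

section Identifiability

open Matrix

theorem tendsto_generic_castSucc {𝕜 : Type*} [Field 𝕜] [Infinite 𝕜] {n : ℕ} {k : Type*}
    (V : Fin (n + 1) → Type*) [∀ j, AddCommGroup (V j)] [∀ j, Module 𝕜 (V j)] :
    Filter.Tendsto (fun (p : k → ∀ j, V j) i (j : Fin n) => p i j.castSucc)
      (generic 𝕜 (k → ∀ j, V j)) (generic 𝕜 (k → ∀ j : Fin n, V j.castSucc)) := by
  let L : (k → ∀ j, V j) →ₗ[𝕜] k → ∀ j : Fin n, V j.castSucc :=
    { toFun := fun p i j => p i j.castSucc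
      map_add' := fun _ _ => rfl
      map_smul' := fun _ _ => rfl }
  exact tendsto_generic (L := L) fun x => ⟨fun i => Fin.snoc (α := V) (x i) 0, by ext; simp [L]⟩

theorem tendsto_generic_last {𝕜 : Type*} [Field 𝕜] [Infinite 𝕜] {n : ℕ} {k : Type*}
    (V : Fin (n + 1) → Type*) [∀ j, AddCommGroup (V j)] [∀ j, Module 𝕜 (V j)] :
    Filter.Tendsto (fun (p : k → ∀ j, V j) i => p i (Fin.last n))
      (generic 𝕜 (k → ∀ j, V j)) (generic 𝕜 (k → V (Fin.last n))) :=
  tendsto_generic (L := LinearMap.pi fun i => LinearMap.proj (Fin.last n) ∘ₗ LinearMap.proj i)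
    fun w => ⟨fun i => Fin.snoc (α := V) 0 (w i), by ext; simp⟩

theorem eventually_generic_evalW_ne_zero {q k : ℕ} {a : Fin q → ℕ}
    {F : MvPolynomial (WIdx q a k) ℂ} (hF : ∃ p, evalW F p ≠ 0) :
    ∀ᶠ p in generic ℂ (Fin k → ∀ j, Fin (a j + 1) → ℂ), evalW F p ≠ 0 := by
  obtain ⟨p₀, hp₀⟩ := hF
  have hcoord : IsPolyMap ℂ fun (p : Fin k → ∀ j, Fin (a j + 1) → ℂ) (x : WIdx q a k) =>
      p x.1 x.2.1 x.2.2 :=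
    .pi fun x => ((IsPolyMap.id.apply x.1).apply x.2.1).apply x.2.2
  exact eventually_generic_ne_zero (hcoord.comp_mem_polyFun
    ((mem_polyFun_iff_exists_mvPolynomial (.refl ℂ _)).2 ⟨F, fun _ => rfl⟩)) hp₀

variable {n k : ℕ} {a : Fin (n + 1) → ℕ}

theorem exists_isDecomposable_sum_eq_Phi_ne {p : Fin k → ∀ j, Fin (a j + 1) → ℂ} {i : Fin k}
    (hN : ∏ j : Fin n, (a j.castSucc + 1) < ∑ j : Fin n, a j.castSucc + k)
    (hseg : LinearIndependent ℂ fun i => seg fun j : Fin n => p i j.castSucc)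
    (hsurj : Function.Surjective (tangentSpanMap (fun i (j : Fin n) => p i j.castSucc) i))
    (hlast : LinearIndependent ℂ fun i => p i (Fin.last n)) :
    ∃ s : Fin k → Ten (n + 1) a, (∀ j, IsDecomposable (s j)) ∧ ∑ j, s j = Phi a p ∧
      ∀ j, s i ≠ tprod ℂ (p j) := by
  obtain ⟨y, w, hy, hw, hsum, hne⟩ := exists_sum_vecMulVec_seg_eq_ne
    (by simp only [Fintype.card_pi, Fintype.card_fin, sum_add_one]; omega) hseg hsurj hlast
  refine ⟨fun j => tprod ℂ (Fin.snoc (α := fun j => Fin (a j + 1) → ℂ) (y j) (w j)),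
    fun j => isDecomposable_tprod (by simpa using hy j) (by simpa using hw j),
    (flatten a).injective ?_, fun j hj => hne j ?_⟩
  · simpa only [Phi, map_sum, flatten_tprod, Fin.snoc_last, Fin.snoc_castSucc] using hsum
  · simpa only [flatten_tprod, Fin.snoc_last, Fin.snoc_castSucc] using congrArg (flatten a) hj

theorem not_identifiable (hk : k ≤ ∏ j : Fin n, (a j.castSucc + 1)) (hm : k ≤ a (Fin.last n) + 1)
    (hN : ∏ j : Fin n, (a j.castSucc + 1) < ∑ j : Fin n, a j.castSucc + k) :
    ¬ Identifiable (n + 1) a k := by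
  rintro ⟨F, hF, hident⟩
  have hk0 : 0 < k := by
    have := sum_card_lt_card_pi_add_card (κ := fun j : Fin n => Fin (a j.castSucc + 1))
    simp only [Fintype.card_pi, Fintype.card_fin, sum_add_one] at this
    omega
  let i : Fin k := ⟨0, hk0⟩
  have hcast := tendsto_generic_castSucc (𝕜 := ℂ) (k := Fin k) fun j => Fin (a j + 1) → ℂ
  obtain ⟨p, hp, hseg, hsurj, hlast⟩ := ((eventually_generic_evalW_ne_zero hF).and <|
    (hcast.eventually (eventually_generic_linearIndependent_seg (by simpa using hk))).and <|
    (hcast.eventually (eventually_generic_tangentSpanMap_surjective i (by simpa using hk)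
      (by simp only [Fintype.card_pi, Fintype.card_fin, sum_add_one]; omega))).and <|
    (tendsto_generic_last (𝕜 := ℂ) fun j => Fin (a j + 1) → ℂ).eventually
      (eventually_generic_linearIndependent_row (by simpa using hm))).exists
  obtain ⟨s, hs, hsum, hne⟩ := exists_isDecomposable_sum_eq_Phi_ne hN hseg hsurj hlast
  have hmap := (hident p hp).2 s (fun j => tprod ℂ (p j)) hs
    (fun j => isDecomposable_tprod (hseg.ne_zero j) (hlast.ne_zero j)) hsum rfl
  obtain ⟨j, -, hj⟩ := Multiset.mem_map.1
    (hmap ▸ Multiset.mem_map_of_mem s (Finset.mem_univ i))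
  exact hne j hj.symm

end Identifiability

theorem prod_filter_lt_eq {M : Type*} [CommMonoid M] {n : ℕ} (f : Fin (n + 1) → M) :
    ∏ i ∈ Finset.univ.filter (fun i : Fin (n + 1) => (i : ℕ) < n + 1 - 1), f i =
      ∏ j : Fin n, f j.castSucc := by
  rw [Finset.prod_filter, Fin.prod_univ_castSucc]
  simp

theorem sum_filter_lt_eq {M : Type*} [AddCommMonoid M] {n : ℕ} (f : Fin (n + 1) → M) :
    ∑ i ∈ Finset.univ.filter (fun i : Fin (n + 1) => (i : ℕ) < n + 1 - 1), f i =
      ∑ j : Fin n, f j.castSucc := by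
  rw [Finset.sum_filter, Fin.sum_univ_castSucc]
  simp

theorem stmt_17_general (q : ℕ) (hq : 0 < q) (a : Fin q → ℕ) :
    ((∏ i ∈ Finset.univ.filter (fun i : Fin q => (i : ℕ) < q - 1), ((a i : ℤ) + 1)) -
        (∑ i ∈ Finset.univ.filter (fun i : Fin q => (i : ℕ) < q - 1), (a i : ℤ)) ≤
          (a ⟨q - 1, by omega⟩ : ℤ) + 1 →
      ∃ F : MvPolynomial (BIdx q a) ℂ,
        (∃ c, MvPolynomial.eval c F ≠ 0) ∧
        ∀ c : BIdx q a → ℂ, MvPolynomial.eval c F ≠ 0 →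
          tensorRank (fromCoords a c) =
            min (a ⟨q - 1, by omega⟩ + 1)
              (∏ i ∈ Finset.univ.filter (fun i : Fin q => (i : ℕ) < q - 1), (a i + 1))) ∧
    ∀ k : ℕ,
      (∏ i ∈ Finset.univ.filter (fun i : Fin q => (i : ℕ) < q - 1), ((a i : ℤ) + 1)) -
        (∑ i ∈ Finset.univ.filter (fun i : Fin q => (i : ℕ) < q - 1), (a i : ℤ)) < (k : ℤ) →
      k ≤ min (a ⟨q - 1, by omega⟩ + 1)
        (∏ i ∈ Finset.univ.filter (fun i : Fin q => (i : ℕ) < q - 1), (a i + 1)) →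
      ¬ Identifiable q a k := by
  obtain ⟨n, rfl⟩ : ∃ n, q = n + 1 := ⟨q - 1, by omega⟩
  have hlast : (⟨n + 1 - 1, by omega⟩ : Fin (n + 1)) = Fin.last n := rfl
  have hcast : ∏ j : Fin n, ((a j.castSucc : ℤ) + 1) = (∏ j : Fin n, (a j.castSucc + 1) : ℕ) := by
    push_cast
    rfl
  simp only [prod_filter_lt_eq, sum_filter_lt_eq, hlast, hcast, ← Nat.cast_sum]
  exact ⟨fun h => eventually_generic_ten_iff.1 (eventually_generic_tensorRank_eq (by omega)),
    fun k hk hk' => not_identifiable (hk'.trans (min_le_right _ _)) (hk'.trans (min_le_left _ _))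
      (by omega)⟩

/-- ranks of general tensors in the unbalanced case, and failure of
identifiability above the critical range. -/
theorem stmt_17 (q : ℕ) (hq : 3 ≤ q) (a : Fin q → ℕ) (hmono : Monotone a)
    (ha : ∀ i, 0 < a i) :
    (((∏ i ∈ Finset.univ.filter (fun i : Fin q => (i : ℕ) < q - 1), ((a i : ℤ) + 1)) -
        (∑ i ∈ Finset.univ.filter (fun i : Fin q => (i : ℕ) < q - 1), (a i : ℤ)) + 1 ≤ (a ⟨q - 1, by omega⟩ : ℤ)) →
      ∃ F : MvPolynomial (BIdx q a) ℂ,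
        (∃ c, MvPolynomial.eval c F ≠ 0) ∧
        ∀ c : BIdx q a → ℂ, MvPolynomial.eval c F ≠ 0 →
          tensorRank (fromCoords a c) =
            min (a ⟨q - 1, by omega⟩ + 1)
              (∏ i ∈ Finset.univ.filter (fun i : Fin q => (i : ℕ) < q - 1), (a i + 1))) ∧
    (((a ⟨q - 1, by omega⟩ : ℤ) = (∏ i ∈ Finset.univ.filter (fun i : Fin q => (i : ℕ) < q - 1), ((a i : ℤ) + 1)) -
        ∑ i ∈ Finset.univ.filter (fun i : Fin q => (i : ℕ) < q - 1), (a i : ℤ)) →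
      ∃ F : MvPolynomial (BIdx q a) ℂ,
        (∃ c, MvPolynomial.eval c F ≠ 0) ∧
        ∀ c : BIdx q a → ℂ, MvPolynomial.eval c F ≠ 0 →
          tensorRank (fromCoords a c) = a ⟨q - 1, by omega⟩ + 1) ∧
    (((∏ i ∈ Finset.univ.filter (fun i : Fin q => (i : ℕ) < q - 1), ((a i : ℤ) + 1)) -
        (∑ i ∈ Finset.univ.filter (fun i : Fin q => (i : ℕ) < q - 1), (a i : ℤ)) + 1 ≤ (a ⟨q - 1, by omega⟩ : ℤ)) →
      ∀ k : ℕ,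
        (∏ i ∈ Finset.univ.filter (fun i : Fin q => (i : ℕ) < q - 1), ((a i : ℤ) + 1)) -
          (∑ i ∈ Finset.univ.filter (fun i : Fin q => (i : ℕ) < q - 1), (a i : ℤ)) < (k : ℤ) →
        k ≤ min (a ⟨q - 1, by omega⟩ + 1) (∏ i ∈ Finset.univ.filter (fun i : Fin q => (i : ℕ) < q - 1), (a i + 1)) →
        ¬ Identifiable q a k) := by
  have hpos : 0 < ∑ i ∈ Finset.univ.filter (fun i : Fin q => (i : ℕ) < q - 1), (a i : ℤ) :=
    Finset.sum_pos (fun i _ => mod_cast ha i)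
      ⟨⟨0, by omega⟩, Finset.mem_filter.2 ⟨Finset.mem_univ _, show 0 < q - 1 by omega⟩⟩
  obtain ⟨hrank, hident⟩ := stmt_17_general q (by omega) a
  refine ⟨fun h => hrank (by linarith), fun h => ?_, fun _ => hident⟩
  have hle : a ⟨q - 1, by omega⟩ + 1 ≤
      ∏ i ∈ Finset.univ.filter (fun i : Fin q => (i : ℕ) < q - 1), (a i + 1) := by
    have hle' : (a ⟨q - 1, by omega⟩ : ℤ) + 1 ≤
        ∏ i ∈ Finset.univ.filter (fun i : Fin q => (i : ℕ) < q - 1), ((a i : ℤ) + 1) := by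
      linarith
    exact_mod_cast hle'
  simpa only [min_eq_left hle] using hrank (by linarith)
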